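/- Let (T,m) be a marked tree containing an internal vertex v₁ with mark (w₁,d₁) satisfying w₁ = d₁ + 1. Then the undotting substitution z_{w,d} ↦ D_{w,d} applied to the states-model expansion Σ_{A⊆E(T)} z_{λ(T,m,A)} of the M-polynomial produces a cancellation: there exist two monomials of opposite sign with the same underlying variable product. Conversely, if every mark of (T,m) is strict (w > d+1), the resulting expression is cancellation-free. -/

import Mathlib

open MvPolynomial

/-- The undotting substitution: the variable `z_{(w,d)}` is sent to
`D_{w,d} = ∑_{i=0}^{d} (-1)^i C(d,i) z_{(w-i,0)} z_{(1,0)}^i`. -/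
noncomputable def undot (p : ℕ × ℕ) : MvPolynomial (ℕ × ℕ) ℚ :=
  ∑ i ∈ Finset.range (p.2 + 1),
    ((-1 : ℚ) ^ i * (p.2.choose i : ℚ)) • (X (p.1 - i, 0) * X (1, 0) ^ i)

/-- The states-model expansion of the `M`-polynomial of a marked graph:
`M_{(G,m)}(z) = ∑_{A ⊆ E(G)} z_{λ(G,m,A)}`, where `λ(G,m,A)` is the multiset of
total marks (dot-sums) of the connected components of the spanning subgraph
with edge set `A`; a component with vertex set `S` has total mark
`(∑_{x∈S} w_x, ∑_{x∈S} d_x + (|S| - 1))`. -/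
noncomputable def Mpoly {V : Type*} [Fintype V] [DecidableEq V]
    (G : SimpleGraph V) [DecidableRel G.Adj] (m : V → ℕ × ℕ) :
    MvPolynomial (ℕ × ℕ) ℚ :=
  ∑ A ∈ G.edgeFinset.powerset,
    ∏ᶠ c : (SimpleGraph.fromEdgeSet (↑A : Set (Sym2 V))).ConnectedComponent,
      X ((∑ᶠ x ∈ c.supp, (m x).1),
         (∑ᶠ x ∈ c.supp, (m x).2) + (Nat.card c.supp - 1))

section SumAbsCoeff

variable {σ ι : Type*} (s : Finset ι) (e : ι → σ →₀ ℕ) (c : ι → ℚ)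

open Classical in
theorem sum_abs_coeff_sum_monomial :
    (∑ μ ∈ (∑ j ∈ s, monomial (e j) (c j)).support, |(∑ j ∈ s, monomial (e j) (c j)).coeff μ|) =
      ∑ μ ∈ s.image e, |∑ j ∈ s with e j = μ, c j| := by
  have hcoeff : ∀ μ, (∑ j ∈ s, monomial (e j) (c j)).coeff μ = ∑ j ∈ s with e j = μ, c j := by
    intro μ
    simp [coeff_sum, coeff_monomial, Finset.sum_filter]
  simp_rw [hcoeff]
  refine Finset.sum_subset ?_ ?_
  · intro μ hμ
    rw [mem_support_iff, hcoeff] at hμ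
    obtain ⟨j, hj, -⟩ := Finset.exists_ne_zero_of_sum_ne_zero hμ
    rw [Finset.mem_filter] at hj
    exact Finset.mem_image.2 ⟨j, hj⟩
  · intro μ _ hμ
    rw [notMem_support_iff, hcoeff] at hμ
    rw [hμ, abs_zero]

theorem sum_abs_coeff_lt_of_cancel {j k : ι} (hj : j ∈ s) (hk : k ∈ s) (he : e j = e k)
    (hc : c j * c k < 0) :
    (∑ μ ∈ (∑ j ∈ s, monomial (e j) (c j)).support, |(∑ j ∈ s, monomial (e j) (c j)).coeff μ|) <
      ∑ j ∈ s, |c j| := by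
  classical
  rw [sum_abs_coeff_sum_monomial,
    ← Finset.sum_fiberwise_of_maps_to (fun i hi ↦ Finset.mem_image_of_mem e hi) (fun j ↦ |c j|)]
  refine Finset.sum_lt_sum (fun μ _ ↦ Finset.abs_sum_le_sum_abs _ _)
    ⟨e j, Finset.mem_image_of_mem e hj, ?_⟩
  have hjk : j ≠ k := by
    rintro rfl
    exact absurd hc (not_lt.2 (mul_self_nonneg _))
  have hj' : j ∈ s.filter (fun i ↦ e i = e j) := by simp [hj]
  have hk' : k ∈ (s.filter (fun i ↦ e i = e j)).erase j := by simp [hk, he, hjk.symm]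
  rw [← Finset.add_sum_erase _ _ hj', ← Finset.add_sum_erase _ _ hk',
    ← Finset.add_sum_erase _ _ hj', ← Finset.add_sum_erase _ _ hk', ← add_assoc, ← add_assoc]
  refine (abs_add_le _ _).trans_lt
    (add_lt_add_of_lt_of_le ?_ (Finset.abs_sum_le_sum_abs _ _))
  rcases mul_neg_iff.1 hc with ⟨h1, h2⟩ | ⟨h1, h2⟩
  · rw [abs_of_pos h1, abs_of_neg h2, abs_lt]
    constructor <;> linarith
  · rw [abs_of_neg h1, abs_of_pos h2, abs_lt]
    constructor <;> linarith

theorem sum_abs_coeff_eq_of_sign (ε : (σ →₀ ℕ) → ℚ) (hε : ∀ μ, |ε μ| = 1)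
    (hc : ∀ j ∈ s, c j = ε (e j) * |c j|) :
    (∑ μ ∈ (∑ j ∈ s, monomial (e j) (c j)).support, |(∑ j ∈ s, monomial (e j) (c j)).coeff μ|) =
      ∑ j ∈ s, |c j| := by
  classical
  rw [sum_abs_coeff_sum_monomial,
    ← Finset.sum_fiberwise_of_maps_to (fun i hi ↦ Finset.mem_image_of_mem e hi) (fun j ↦ |c j|)]
  refine Finset.sum_congr rfl fun μ _ ↦ ?_
  have h : ∑ j ∈ s with e j = μ, c j = ε μ * ∑ j ∈ s with e j = μ, |c j| := by
    rw [Finset.mul_sum]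
    refine Finset.sum_congr rfl fun j hj ↦ ?_
    obtain ⟨hjs, rfl⟩ := Finset.mem_filter.1 hj
    exact hc j hjs
  rw [h, abs_mul, hε, one_mul, abs_of_nonneg (Finset.sum_nonneg fun _ _ ↦ abs_nonneg _)]

end SumAbsCoeff

section Forest

variable {V : Type*} [Fintype V]

open Classical in
theorem SimpleGraph.IsAcyclic.sum_card_supp_sub_one {H : SimpleGraph V} (hH : H.IsAcyclic) :
    ∑ c : H.ConnectedComponent, (Nat.card c.supp - 1) = H.edgeFinset.card := by
  let f : (Σ c : H.ConnectedComponent, c.toSimpleGraph.Dart) ≃ H.Dart :=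
    { toFun := fun p ↦ ⟨(p.2.fst.1, p.2.snd.1), p.2.adj⟩
      invFun := fun d ↦ ⟨H.connectedComponentMk d.fst,
        ⟨(⟨d.fst, rfl⟩, ⟨d.snd, (SimpleGraph.ConnectedComponent.sound d.adj.reachable).symm⟩),
          d.adj⟩⟩
      left_inv := by
        rintro ⟨c, ⟨⟨⟨x, rfl⟩, y⟩, h⟩⟩
        rfl
      right_inv := fun d ↦ rfl }
  have h1 := Fintype.card_congr f
  rw [Fintype.card_sigma, H.dart_card_eq_twice_card_edges] at h1
  have h2 : ∀ c : H.ConnectedComponent,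
      Fintype.card c.toSimpleGraph.Dart = 2 * (Nat.card c.supp - 1) := by
    intro c
    have := (hH.isTree_connectedComponent c).card_edgeFinset
    rw [c.toSimpleGraph.dart_card_eq_twice_card_edges, Nat.card_eq_fintype_card]
    have h3 : Fintype.card c.supp = Fintype.card c := Fintype.card_congr (Equiv.refl _)
    omega
  simp_rw [h2, ← Finset.mul_sum] at h1
  omega

end Forest

section TotalMark

variable {V : Type*}

/-- The total mark of a connected component. -/
noncomputable def totalMark (m : V → ℕ × ℕ) {H : SimpleGraph V} (c : H.ConnectedComponent) :
    ℕ × ℕ :=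
  ((∑ᶠ x ∈ c.supp, (m x).1), (∑ᶠ x ∈ c.supp, (m x).2) + (Nat.card c.supp - 1))

theorem totalMark_eq (m : V → ℕ × ℕ) {H : SimpleGraph V} {c : H.ConnectedComponent} {S : Finset V}
    (hS : c.supp = S) :
    totalMark m c = (∑ x ∈ S, (m x).1, ∑ x ∈ S, (m x).2 + (S.card - 1)) := by
  rw [totalMark, hS, finsum_mem_coe_finset, finsum_mem_coe_finset, Nat.card_coe_set_eq,
    Set.ncard_coe_finset]

theorem totalMark_strict [Fintype V] {m : V → ℕ × ℕ} (hm : ∀ x, (m x).2 + 1 < (m x).1)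
    {H : SimpleGraph V} (c : H.ConnectedComponent) : (totalMark m c).2 + 1 < (totalMark m c).1 := by
  classical
  rw [totalMark_eq m (Set.coe_toFinset c.supp).symm]
  have h1 : 0 < c.supp.toFinset.card :=
    Finset.card_pos.2 (Set.toFinset_nonempty.2 c.nonempty_supp)
  have h2 : ∑ x ∈ c.supp.toFinset, ((m x).2 + 2) ≤ ∑ x ∈ c.supp.toFinset, (m x).1 :=
    Finset.sum_le_sum fun x _ ↦ hm x
  rw [Finset.sum_add_distrib, Finset.sum_const, smul_eq_mul] at h2
  dsimp only
  omega

theorem finsum_totalMark_snd [Fintype V] (m : V → ℕ × ℕ) {H : SimpleGraph V} (hH : H.IsAcyclic) :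
    ∑ᶠ c : H.ConnectedComponent, (totalMark m c).2 = ∑ x, (m x).2 + H.edgeSet.ncard := by
  classical
  rw [finsum_eq_sum_of_fintype, Set.ncard_eq_toFinset_card', ← SimpleGraph.edgeFinset,
    ← hH.sum_card_supp_sub_one, ← Finset.sum_fiberwise (s := Finset.univ)
    (g := H.connectedComponentMk), ← Finset.sum_add_distrib]
  refine Finset.sum_congr rfl fun c _ ↦ ?_
  have hS : c.supp = ({x | H.connectedComponentMk x = c} : Finset V) := by
    ext x
    simp
  rw [totalMark_eq m hS, hS, Nat.card_coe_set_eq, Set.ncard_coe_finset]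

end TotalMark

section Expansion

/-- The exponent of the `i`-th monomial of `undot p`. -/
noncomputable def undotExponent (p : ℕ × ℕ) (i : ℕ) : ℕ × ℕ →₀ ℕ :=
  Finsupp.single (p.1 - i, 0) 1 + Finsupp.single (1, 0) i

/-- The coefficient of the `i`-th monomial of `undot p`. -/
def undotCoeff (p : ℕ × ℕ) (i : ℕ) : ℚ := (-1) ^ i * (p.2.choose i : ℚ)

theorem undot_eq_sum_monomial (p : ℕ × ℕ) :
    undot p = ∑ i ∈ Finset.range (p.2 + 1), monomial (undotExponent p i) (undotCoeff p i) := by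
  refine Finset.sum_congr rfl fun i _ ↦ ?_
  rw [X_pow_eq_monomial, X, monomial_mul, smul_monomial]
  simp [undotExponent, undotCoeff]

theorem abs_undotCoeff (p : ℕ × ℕ) (i : ℕ) : |undotCoeff p i| = p.2.choose i := by
  simp [undotCoeff, abs_mul]

theorem sum_abs_undotCoeff (p : ℕ × ℕ) :
    ∑ i ∈ Finset.range (p.2 + 1), |undotCoeff p i| = 2 ^ p.2 := by
  simp_rw [abs_undotCoeff]
  exact_mod_cast Nat.sum_range_choose p.2

theorem undotExponent_apply_of_lt {p : ℕ × ℕ} {i : ℕ} (h : i + 1 < p.1) :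
    undotExponent p i (1, 0) = i := by
  have : p.1 - i ≠ 1 := by omega
  simp [undotExponent, this]

variable {V : Type*} [Fintype V]

open Classical in
/-- The choices of a term of the undotted total mark of every component of `H`. -/
noncomputable def undotChoices (m : V → ℕ × ℕ) (H : SimpleGraph V) :
    Finset (H.ConnectedComponent → ℕ) :=
  Fintype.piFinset fun c ↦ Finset.range ((totalMark m c).2 + 1)

theorem mem_undotChoices {m : V → ℕ × ℕ} {H : SimpleGraph V} {i : H.ConnectedComponent → ℕ} :
    i ∈ undotChoices m H ↔ ∀ c, i c ≤ (totalMark m c).2 := by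
  simp [undotChoices, Fintype.mem_piFinset]

theorem finprod_sum_range_totalMark {R : Type*} [CommSemiring R] (m : V → ℕ × ℕ)
    (H : SimpleGraph V) (g : H.ConnectedComponent → ℕ → R) :
    ∏ᶠ c, ∑ i ∈ Finset.range ((totalMark m c).2 + 1), g c i =
      ∑ i ∈ undotChoices m H, ∏ᶠ c, g c (i c) := by
  classical
  simp_rw [finprod_eq_prod_of_fintype]
  rw [Finset.prod_univ_sum, undotChoices]

/-- A term of the undotted states-model expansion: a set of edges, and the choice of a term of
the undotted total mark of every component. -/
abbrev UndotTerm (V : Type*) : Type _ :=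
  Σ A : Finset (Sym2 V), (SimpleGraph.fromEdgeSet (A : Set (Sym2 V))).ConnectedComponent → ℕ

/-- The terms of the undotted states-model expansion. -/
noncomputable def undotTerms (E : Finset (Sym2 V)) (m : V → ℕ × ℕ) : Finset (UndotTerm V) :=
  E.powerset.sigma fun A ↦ undotChoices m (SimpleGraph.fromEdgeSet (A : Set (Sym2 V)))

theorem mem_undotTerms {m : V → ℕ × ℕ} {E : Finset (Sym2 V)} {j : UndotTerm V} :
    j ∈ undotTerms E m ↔ j.1 ⊆ E ∧ ∀ c, j.2 c ≤ (totalMark m c).2 := by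
  rw [undotTerms, Finset.mem_sigma, Finset.mem_powerset, mem_undotChoices]

/-- The exponent of a term of the undotted states-model expansion. -/
noncomputable def termExponent (m : V → ℕ × ℕ) (j : UndotTerm V) : ℕ × ℕ →₀ ℕ :=
  ∑ᶠ c, undotExponent (totalMark m c) (j.2 c)

/-- The coefficient of a term of the undotted states-model expansion. -/
noncomputable def termCoeff (m : V → ℕ × ℕ) (j : UndotTerm V) : ℚ :=
  ∏ᶠ c, undotCoeff (totalMark m c) (j.2 c)

theorem bind₁_undot_Mpoly [DecidableEq V] (G : SimpleGraph V) [DecidableRel G.Adj]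
    (m : V → ℕ × ℕ) :
    bind₁ undot (Mpoly G m) =
      ∑ j ∈ undotTerms G.edgeFinset m, monomial (termExponent m j) (termCoeff m j) := by
  rw [Mpoly, map_sum, undotTerms, Finset.sum_sigma]
  refine Finset.sum_congr rfl fun A _ ↦ ?_
  have hmonomial : ∀ i, monomial (termExponent m ⟨A, i⟩) (termCoeff m ⟨A, i⟩) =
      ∏ᶠ c, monomial (undotExponent (totalMark m c) (i c)) (undotCoeff (totalMark m c) (i c)) := by
    intro i
    classical
    rw [termExponent, termCoeff, finsum_eq_sum_of_fintype, finprod_eq_prod_of_fintype,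
      finprod_eq_prod_of_fintype, monomial_sum_prod]
  simp_rw [hmonomial]
  rw [← finprod_sum_range_totalMark m _ fun c i ↦
      monomial (undotExponent (totalMark m c) i) (undotCoeff (totalMark m c) i),
    ← AlgHom.coe_toMonoidHom, MonoidHom.map_finprod _ (Set.toFinite _)]
  refine finprod_congr fun c ↦ ?_
  rw [← undot_eq_sum_monomial]
  exact bind₁_X_right _ _

theorem sum_abs_termCoeff [DecidableEq V] {G : SimpleGraph V} [DecidableRel G.Adj] (hG : G.IsTree)
    (m : V → ℕ × ℕ) :
    ∑ j ∈ undotTerms G.edgeFinset m, |termCoeff m j| =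
      3 ^ (Fintype.card V - 1) * 2 ^ (∑ x : V, (m x).2) := by
  rw [undotTerms, Finset.sum_sigma]
  have hA : ∀ A ∈ G.edgeFinset.powerset,
      ∑ i ∈ undotChoices m (SimpleGraph.fromEdgeSet (A : Set (Sym2 V))), |termCoeff m ⟨A, i⟩| =
        2 ^ A.card * 2 ^ (∑ x : V, (m x).2) := by
    intro A hA
    have hAG : (A : Set (Sym2 V)) ⊆ G.edgeSet := by
      simpa [← Finset.coe_subset] using hA
    have hacyc : (SimpleGraph.fromEdgeSet (A : Set (Sym2 V))).IsAcyclic :=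
      hG.isAcyclic.anti (by
        rw [SimpleGraph.fromEdgeSet_le]
        exact Set.sdiff_subset.trans hAG)
    have hedge : (SimpleGraph.fromEdgeSet (A : Set (Sym2 V))).edgeSet = A := by
      rw [SimpleGraph.edgeSet_fromEdgeSet]
      ext e
      simp only [Set.mem_sdiff, Finset.mem_coe, and_iff_left_iff_imp]
      exact fun he ↦ G.not_isDiag_of_mem_edgeSet (hAG he)
    have habs : ∀ i, |termCoeff m ⟨A, i⟩| = ∏ᶠ c, |undotCoeff (totalMark m c) (i c)| := by
      intro i
      rw [termCoeff, finprod_eq_prod_of_fintype, finprod_eq_prod_of_fintype, Finset.abs_prod]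
    simp_rw [habs]
    rw [← finprod_sum_range_totalMark m _ fun c i ↦ |undotCoeff (totalMark m c) i|]
    simp_rw [sum_abs_undotCoeff]
    have hsum := finsum_totalMark_snd m hacyc
    rw [finsum_eq_sum_of_fintype, hedge, Set.ncard_coe_finset] at hsum
    rw [finprod_eq_prod_of_fintype, Finset.prod_pow_eq_pow_sum, hsum, pow_add, mul_comm]
  rw [Finset.sum_congr rfl hA, ← Finset.sum_mul]
  congr 1
  have h3 := Finset.sum_pow_mul_eq_add_pow (2 : ℚ) 1 G.edgeFinset
  simp only [one_pow, mul_one] at h3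
  have := hG.card_edgeFinset
  rw [h3, show Fintype.card V - 1 = G.edgeFinset.card by omega]
  norm_num

theorem termCoeff_eq_neg_one_pow_mul (m : V → ℕ × ℕ) (j : UndotTerm V) :
    termCoeff m j = (-1) ^ (∑ᶠ c, j.2 c) * |termCoeff m j| := by
  classical
  rw [termCoeff, finsum_eq_sum_of_fintype, finprod_eq_prod_of_fintype, Finset.abs_prod,
    ← Finset.prod_pow_eq_pow_sum, ← Finset.prod_mul_distrib]
  refine Finset.prod_congr rfl fun c _ ↦ ?_
  rw [abs_undotCoeff, undotCoeff]

theorem abs_termCoeff_pos {m : V → ℕ × ℕ} {E : Finset (Sym2 V)} {j : UndotTerm V}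
    (hj : j ∈ undotTerms E m) : 0 < |termCoeff m j| := by
  classical
  rw [termCoeff, finprod_eq_prod_of_fintype, Finset.abs_prod]
  refine Finset.prod_pos fun c _ ↦ ?_
  rw [abs_undotCoeff]
  exact_mod_cast Nat.choose_pos ((mem_undotTerms.1 hj).2 c)

theorem termExponent_apply_of_strict {m : V → ℕ × ℕ} (hm : ∀ x, (m x).2 + 1 < (m x).1)
    {E : Finset (Sym2 V)} {j : UndotTerm V} (hj : j ∈ undotTerms E m) :
    termExponent m j (1, 0) = ∑ᶠ c, j.2 c := by
  classical
  rw [termExponent, finsum_eq_sum_of_fintype, finsum_eq_sum_of_fintype, Finsupp.finsetSum_apply]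
  refine Finset.sum_congr rfl fun c _ ↦ undotExponent_apply_of_lt ?_
  have := totalMark_strict hm c
  have := (mem_undotTerms.1 hj).2 c
  omega

end Expansion

section Cancellation

variable {V : Type*}

theorem mul_termCoeff_neg [Fintype V] {m : V → ℕ × ℕ} {E : Finset (Sym2 V)} {j k : UndotTerm V}
    (hj : j ∈ undotTerms E m) (hk : k ∈ undotTerms E m) (h : ∑ᶠ c, k.2 c = ∑ᶠ c, j.2 c + 1) :
    termCoeff m j * termCoeff m k < 0 := by
  rw [termCoeff_eq_neg_one_pow_mul m j, termCoeff_eq_neg_one_pow_mul m k, h, pow_succ]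
  have h1 := mul_pos (abs_termCoeff_pos hj) (abs_termCoeff_pos hk)
  have h2 : ((-1 : ℚ) ^ (∑ᶠ c, j.2 c)) * (-1) ^ (∑ᶠ c, j.2 c) = 1 := by
    rw [← mul_pow]
    simp
  linear_combination h1 - |termCoeff m j| * |termCoeff m k| * h2

theorem SimpleGraph.finsum_connectedComponent {M : Type*} [AddCommMonoid M] {H : SimpleGraph V}
    (R : Finset V) (hinj : ∀ x ∈ R, ∀ y ∈ R, H.Reachable x y → x = y)
    (hsurj : ∀ x, ∃ y ∈ R, H.Reachable y x) (g : H.ConnectedComponent → M) :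
    ∑ᶠ c, g c = ∑ x ∈ R, g (H.connectedComponentMk x) := by
  rw [← finsum_mem_coe_finset, ← finsum_mem_univ]
  refine (finsum_mem_eq_of_bijOn H.connectedComponentMk ⟨fun _ _ ↦ Set.mem_univ _, ?_, ?_⟩
    fun _ _ ↦ rfl).symm
  · exact fun x hx y hy hxy ↦ hinj x hx y hy (SimpleGraph.ConnectedComponent.exact hxy)
  · intro c _
    induction c using SimpleGraph.ConnectedComponent.ind with
    | h x =>
      obtain ⟨y, hy, hyx⟩ := hsurj x
      exact ⟨y, hy, SimpleGraph.ConnectedComponent.sound hyx⟩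

theorem reachable_fromEdgeSet_empty_iff {x y : V} :
    (SimpleGraph.fromEdgeSet ((∅ : Finset (Sym2 V)) : Set (Sym2 V))).Reachable x y ↔ x = y := by
  rw [Finset.coe_empty, SimpleGraph.fromEdgeSet_empty, SimpleGraph.reachable_bot]

theorem reachable_fromEdgeSet_singleton_iff [DecidableEq V] {v a : V} (hva : v ≠ a) {x y : V} :
    (SimpleGraph.fromEdgeSet (({s(v, a)} : Finset (Sym2 V)) : Set (Sym2 V))).Reachable x y ↔
      (if x = v then a else x) = (if y = v then a else y) := by
  have hadj : (SimpleGraph.fromEdgeSet (({s(v, a)} : Finset (Sym2 V)) : Set (Sym2 V))).Adj v a := by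
    simp [hva]
  constructor
  · rintro ⟨p⟩
    induction p with
    | nil => rfl
    | cons h p ih =>
      rw [← ih]
      simp only [Finset.coe_singleton, SimpleGraph.fromEdgeSet_adj, Set.mem_singleton_iff,
        Sym2.eq_iff] at h
      obtain ⟨⟨rfl, rfl⟩ | ⟨rfl, rfl⟩, -⟩ := h <;> simp
  · have hrep : ∀ z, (SimpleGraph.fromEdgeSet
        (({s(v, a)} : Finset (Sym2 V)) : Set (Sym2 V))).Reachable z (if z = v then a else z) := by
      intro z
      split_ifs with hz
      · exact hz ▸ hadj.reachable
      · exact SimpleGraph.Reachable.refl _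
    intro h
    exact (hrep x).trans (h ▸ (hrep y).symm)

theorem exists_cancelling_terms [Fintype V] (m : V → ℕ × ℕ) {E : Finset (Sym2 V)} {v a : V}
    (hva : v ≠ a) (hE : s(v, a) ∈ E) (hmv : (m v).1 = (m v).2 + 1) :
    ∃ j ∈ undotTerms E m, ∃ k ∈ undotTerms E m,
      termExponent m j = termExponent m k ∧ termCoeff m j * termCoeff m k < 0 := by
  classical
  let H₀ := SimpleGraph.fromEdgeSet ((∅ : Finset (Sym2 V)) : Set (Sym2 V))
  let H₁ := SimpleGraph.fromEdgeSet (({s(v, a)} : Finset (Sym2 V)) : Set (Sym2 V))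
  have hsum₀ {M : Type} [AddCommMonoid M] (g : H₀.ConnectedComponent → M) :
      ∑ᶠ c, g c = ∑ x, g (H₀.connectedComponentMk x) :=
    SimpleGraph.finsum_connectedComponent _
      (fun _ _ _ _ h ↦ reachable_fromEdgeSet_empty_iff.1 h)
      (fun x ↦ ⟨x, Finset.mem_univ x, SimpleGraph.Reachable.refl x⟩) g
  have hsum₁ {M : Type} [AddCommMonoid M] (g : H₁.ConnectedComponent → M) :
      ∑ᶠ c, g c = ∑ x ∈ Finset.univ.erase v, g (H₁.connectedComponentMk x) := by
    refine SimpleGraph.finsum_connectedComponent _ (fun x hx y hy h ↦ ?_) (fun x ↦ ?_) g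
    · rw [reachable_fromEdgeSet_singleton_iff hva] at h
      simpa [Finset.ne_of_mem_erase hx, Finset.ne_of_mem_erase hy] using h
    · refine ⟨if x = v then a else x, ?_, ?_⟩
      · split_ifs with hx
        · simp [hva.symm]
        · simp [hx]
      · rw [reachable_fromEdgeSet_singleton_iff hva]
        split_ifs <;> simp_all
  have heq₀ {x y : V} : H₀.connectedComponentMk x = H₀.connectedComponentMk y ↔ x = y :=
    SimpleGraph.ConnectedComponent.eq.trans reachable_fromEdgeSet_empty_iff
  have heq₁ {x y : V} : H₁.connectedComponentMk x = H₁.connectedComponentMk y ↔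
      (if x = v then a else x) = (if y = v then a else y) :=
    SimpleGraph.ConnectedComponent.eq.trans (reachable_fromEdgeSet_singleton_iff hva)
  have hmark₀ (x : V) : totalMark m (H₀.connectedComponentMk x) = m x := by
    rw [totalMark_eq m (S := {x})]
    · simp
    · ext y
      rw [SimpleGraph.ConnectedComponent.mem_supp_iff, heq₀]
      simp
  have hmark₁ (x : V) (hxv : x ≠ v) (hxa : x ≠ a) :
      totalMark m (H₁.connectedComponentMk x) = m x := by
    rw [totalMark_eq m (S := {x})]
    · simp
    · ext y
      rw [SimpleGraph.ConnectedComponent.mem_supp_iff, heq₁, if_neg hxv]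
      split_ifs with hy
      · simp [hy, hxa.symm, hxv.symm]
      · simp
  have hmark : totalMark m (H₁.connectedComponentMk a) =
      ((m v).1 + (m a).1, (m v).2 + (m a).2 + 1) := by
    rw [totalMark_eq m (S := {v, a})]
    · simp [Finset.sum_pair hva, Finset.card_pair hva]
    · ext y
      rw [SimpleGraph.ConnectedComponent.mem_supp_iff, heq₁]
      split_ifs <;> simp_all
  have ha : a ∈ Finset.univ.erase v := by simp [hva.symm]
  let j : UndotTerm V := ⟨∅, fun c ↦ if c = H₀.connectedComponentMk v then (m v).2 else 0⟩
  let k : UndotTerm V :=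
    ⟨{s(v, a)}, fun c ↦ if c = H₁.connectedComponentMk a then (m v).2 + 1 else 0⟩
  have hj : j ∈ undotTerms E m := by
    refine mem_undotTerms.2 ⟨Finset.empty_subset _, fun c ↦ ?_⟩
    dsimp only [j]
    split_ifs with hc
    · rw [hc, hmark₀]
    · exact Nat.zero_le _
  have hk : k ∈ undotTerms E m := by
    refine mem_undotTerms.2 ⟨Finset.singleton_subset_iff.2 hE, fun c ↦ ?_⟩
    dsimp only [k]
    split_ifs with hc
    · rw [hc, hmark]
      dsimp only
      omega
    · exact Nat.zero_le _
  refine ⟨j, hj, k, hk, ?_, mul_termCoeff_neg hj hk ?_⟩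
  · have hrest : ∀ x ∈ (Finset.univ.erase v).erase a,
        undotExponent (totalMark m (H₀.connectedComponentMk x))
            (j.2 (H₀.connectedComponentMk x)) =
          undotExponent (totalMark m (H₁.connectedComponentMk x))
            (k.2 (H₁.connectedComponentMk x)) := by
      intro x hx
      simp only [Finset.mem_erase, Finset.mem_univ, and_true] at hx
      have h₁ : H₁.connectedComponentMk x ≠ H₁.connectedComponentMk a := by
        rw [Ne, heq₁]
        simp [hx]
      have h₀ : H₀.connectedComponentMk x ≠ H₀.connectedComponentMk v := by
        rw [Ne, heq₀]
        exact hx.2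
      dsimp only [j, k]
      rw [hmark₀, hmark₁ x hx.2 hx.1, if_neg h₀, if_neg h₁]
    have h₀ : H₀.connectedComponentMk a ≠ H₀.connectedComponentMk v := by
      rw [Ne, heq₀]
      exact hva.symm
    rw [termExponent, termExponent, hsum₀, hsum₁, ← Finset.add_sum_erase _ _ (Finset.mem_univ v),
      ← Finset.add_sum_erase _ _ ha, ← Finset.add_sum_erase _ _ ha, Finset.sum_congr rfl hrest,
      ← add_assoc]
    congr 1
    dsimp only [j, k]
    rw [hmark₀, hmark₀, hmark, if_pos rfl, if_neg h₀, if_pos rfl]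
    simp only [undotExponent, hmv, Nat.add_sub_cancel_left, Nat.sub_zero, Finsupp.single_zero,
      add_zero, Finsupp.single_add]
    abel
  · rw [hsum₀, hsum₁, ← Finset.add_sum_erase _ _ (Finset.mem_univ v),
      ← Finset.add_sum_erase _ _ ha, Finset.sum_eq_zero, Finset.sum_eq_zero]
    · simp [j, k]
    · intro x hx
      simp only [Finset.mem_erase, Finset.mem_univ, and_true] at hx
      simp [j, heq₀, hx]
    · intro x hx
      simp only [Finset.mem_erase, Finset.mem_univ, and_true] at hx
      simp [k, heq₁, hx]

end Cancellation

/-- Cancellation criterion for the undotting substitution on a marked tree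
`(T,m)` (all marks satisfying `w ≥ d+1`).  Before cancellation, the undotted
states-model expansion has `3^{n-1} · 2^{∑_x d_x}` monomials counted with
multiplicity and absolute coefficient value.  If `(T,m)` has an internal vertex
(degree `> 1`) whose mark satisfies `w₁ = d₁ + 1`, a cancellation occurs, i.e.
the sum of absolute values of the coefficients of the resulting polynomial is
strictly smaller than that total; conversely, if every mark is strict
(`w > d + 1`), the resulting expression is cancellation-free, i.e. the sum of
absolute values of the coefficients equals that total. -/
theorem Mpoly_undot_cancellation_iff_strict {V : Type*} [Fintype V]
    [DecidableEq V] (G : SimpleGraph V) [DecidableRel G.Adj] (hG : G.IsTree)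
    (m : V → ℕ × ℕ) (hmarks : ∀ x, (m x).2 + 1 ≤ (m x).1) :
    ((∃ v₁ : V, 1 < G.degree v₁ ∧ (m v₁).1 = (m v₁).2 + 1) →
      (∑ μ ∈ ((bind₁ undot) (Mpoly G m)).support,
          |((bind₁ undot) (Mpoly G m)).coeff μ|) <
        3 ^ (Fintype.card V - 1) * 2 ^ (∑ x : V, (m x).2)) ∧
    ((∀ x : V, (m x).2 + 1 < (m x).1) →
      (∑ μ ∈ ((bind₁ undot) (Mpoly G m)).support,
          |((bind₁ undot) (Mpoly G m)).coeff μ|) =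
        3 ^ (Fintype.card V - 1) * 2 ^ (∑ x : V, (m x).2)) := by
  classical
  rw [bind₁_undot_Mpoly, ← sum_abs_termCoeff hG m]
  refine ⟨?_, fun hstrict ↦ ?_⟩
  · rintro ⟨v, hv, hmv⟩
    obtain ⟨a, ha⟩ := (G.degree_pos_iff_exists_adj v).1 (zero_lt_one.trans hv)
    obtain ⟨j, hj, k, hk, he, hc⟩ := exists_cancelling_terms m ha.ne
      (SimpleGraph.mem_edgeFinset.2 ha) hmv
    exact sum_abs_coeff_lt_of_cancel _ _ _ hj hk he hc
  · exact sum_abs_coeff_eq_of_sign _ _ _ (fun μ ↦ (-1) ^ μ (1, 0)) (by simp)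
      fun j hj ↦ by
        rw [termExponent_apply_of_strict hstrict hj]
        exact termCoeff_eq_neg_one_pow_mul m j
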